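/- For n ≥ 4, the polytope DP(n) (the convex hull of degree partitions of simple graphs on n vertices) has exactly n(n−3)/2 + 6 facets. -/

import Mathlib

open scoped Classical in
/-- The degree of vertex `v` in the simple graph `G` on `[n]`. -/
noncomputable def degC {n : ℕ} (G : SimpleGraph (Fin n)) (v : Fin n) : ℕ :=
  (Finset.univ.filter (fun w => G.Adj v w)).card

/-- `DP n`: the polytope of degree partitions, the convex hull in `ℝ^n` of the
weakly decreasing rearrangements of degree sequences of simple graphs on `[n]`. -/
noncomputable def DP (n : ℕ) : Set (Fin n → ℝ) :=
  convexHull ℝ {x : Fin n → ℝ | Antitone x ∧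
    ∃ (G : SimpleGraph (Fin n)) (σ : Equiv.Perm (Fin n)),
      ∀ i, x i = (degC G (σ i) : ℝ)}

/-!
Pairing a vector `c` with the degrees of a graph with edge weights `w i j ∈ [0, 1]` sums
`(c i + c j) * w i j` over the edges, so it is at most the sum of the positive parts of `c i + c j`,
with equality for the threshold graph of `c`. For `c` the indicator of the first `k` vertices minus
that of the last `l`, this is the Koren inequality indexed by `(k, l)`.

`DP n` is the polyhedron of decreasing vectors satisfying these inequalities: replace a separating
functional by its projection `u` onto the cone of decreasing vectors. The layers
`sign (u i) * 1_{|u i| > t}` of `u` are Koren vectors, and the threshold graph of `u` is optimal for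
all of them simultaneously.

For counting facets it suffices to discard the implied inequalities and to exhibit, for each
remaining one, a point where it alone is tight. The threshold graph of a Koren vector, with the
undecided edges given weight `1 / 2`, makes only that Koren inequality tight; perturbing its degrees
along a suitable decreasing direction makes the monotonicity inequalities strict as well. Starting
from the zero vector, the same perturbation can leave any one monotonicity inequality tight.
-/

open Filter Topology in
theorem exists_pos_forall_lt_add_smul {J E L : Type*} [Finite J] [AddCommGroup E] [Module ℝ E]
    [FunLike L E ℝ] [LinearMapClass L ℝ E ℝ] (a : J → L) (b : J → ℝ) (s : Set J) (x v : E)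
    (h : ∀ j ∈ s, a j x < b j ∨ a j x ≤ b j ∧ a j v < 0) :
    ∃ ε > (0 : ℝ), ∀ j ∈ s, a j (x + ε • v) < b j := by
  have heventually : ∀ᶠ ε in 𝓝[>] (0 : ℝ), ∀ j ∈ s, a j x + ε * a j v < b j := by
    refine (Set.toFinite s).eventually_all.2 fun j hj => ?_
    rcases h j hj with hlt | ⟨hle, hv⟩
    · have hlim : Tendsto (fun ε : ℝ => a j x + ε * a j v) (𝓝[>] 0) (𝓝 (a j x + 0 * a j v)) :=
        (Continuous.tendsto (by fun_prop) 0).mono_left nhdsWithin_le_nhds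
      exact hlim.eventually_lt_const (by simpa using hlt)
    · filter_upwards [self_mem_nhdsWithin] with ε hε
      linarith [mul_neg_of_pos_of_neg (Set.mem_Ioi.1 hε) hv]
  obtain ⟨ε, h, hε⟩ := (heventually.and self_mem_nhdsWithin).exists
  exact ⟨ε, hε, by simpa using h⟩

section Polyhedron

variable {J E : Type*} [AddCommGroup E] [Module ℝ E] [TopologicalSpace E]

/-- The polyhedron cut out by the linear inequalities `a j x ≤ b j`. -/
def polyhedron (a : J → StrongDual ℝ E) (b : J → ℝ) : Set E :=
  {x | ∀ j, a j x ≤ b j}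

/-- The face of `polyhedron a b` on which the `j`-th inequality is tight. -/
def polyhedronFace (a : J → StrongDual ℝ E) (b : J → ℝ) (j : J) : Set E :=
  {x ∈ polyhedron a b | a j x = b j}

/-- `F` is a facet of the full-dimensional polytope `P`: a proper exposed face of codimension one in
the ambient space. In dimension at most one the subtraction also lets the empty face pass. -/
def IsFacet (P F : Set E) : Prop :=
  IsExposed ℝ P F ∧ F ≠ P ∧ Module.finrank ℝ (vectorSpan ℝ F) = Module.finrank ℝ E - 1

/-- Irredundancy of a system of linear inequalities, in the form used to count facets: every
inequality is the only tight one at some point. -/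
def IsIrredundant (a : J → StrongDual ℝ E) (b : J → ℝ) : Prop :=
  ∀ j, ∃ z, a j z = b j ∧ ∀ i ≠ j, a i z < b i

variable {a : J → StrongDual ℝ E} {b : J → ℝ} {P F : Set E} {j : J}

theorem convex_polyhedron : Convex ℝ (polyhedron a b) := by
  simp only [polyhedron, Set.ofPred_forall]
  exact convex_iInter fun j => convex_halfSpace_le (a j).isLinear (b j)

theorem mem_polyhedronFace_of_forall_lt {z : E} (hz : a j z = b j) (hlt : ∀ i ≠ j, a i z < b i) :
    z ∈ polyhedronFace a b j :=
  ⟨fun i => (eq_or_ne i j).elim (fun h => h ▸ hz.le) fun h => (hlt i h).le, hz⟩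

theorem vectorSpan_le_ker_of_forall_eq (c : StrongDual ℝ E) {r : ℝ} (h : ∀ x ∈ F, c x = r) :
    vectorSpan ℝ F ≤ LinearMap.ker (c : E →ₗ[ℝ] ℝ) := by
  refine Submodule.span_le.2 ?_
  rintro _ ⟨x, hx, y, hy, rfl⟩
  simp [h x hx, h y hy]

theorem mem_of_isExposed_of_sub_mem_vectorSpan (hF : IsExposed ℝ P F) {x q : E} (hx : x ∈ P)
    (hq : q ∈ F) (hxq : x - q ∈ vectorSpan ℝ F) : x ∈ F := by
  obtain ⟨c, rfl⟩ := hF ⟨q, hq⟩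
  have hker := vectorSpan_le_ker_of_forall_eq c (r := c q)
    (fun y hy => le_antisymm (hq.2 y hy.1) (hy.2 q hq.1)) hxq
  have hcx : c x = c q := by simpa [sub_eq_zero] using hker
  exact ⟨hx, fun y hy => hcx ▸ hq.2 y hy⟩

theorem exists_mem_forall_lt_of_convex [Finite J] (hF : Convex ℝ F) (hne : F.Nonempty)
    (hFP : F ⊆ polyhedron a b) (h : ∀ j, ∃ x ∈ F, a j x < b j) : ∃ q ∈ F, ∀ j, a j q < b j := by
  classical
  cases nonempty_fintype J
  suffices ∀ s : Finset J, ∃ q ∈ F, ∀ j ∈ s, a j q < b j by simpa using this Finset.univ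
  intro s
  induction s using Finset.induction_on with
  | empty => exact hne.imp fun q hq => ⟨hq, by simp⟩
  | insert i s _ ih =>
    obtain ⟨q, hqF, hq⟩ := ih
    obtain ⟨p, hpF, hp⟩ := h i
    refine ⟨midpoint ℝ q p, hF.midpoint_mem hqF hpF, fun j hj => ?_⟩
    have hmid : a j (midpoint ℝ q p) = (a j q + a j p) / 2 := by
      simp [midpoint_eq_smul_add]; ring
    rcases Finset.mem_insert.1 hj with rfl | hj
    · linarith [hFP hqF j]
    · linarith [hq j hj, hFP hpF j]

theorem eq_polyhedron_of_isExposed_of_forall_lt [Finite J] (hF : IsExposed ℝ (polyhedron a b) F)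
    {q : E} (hqF : q ∈ F) (hq : ∀ j, a j q < b j) : F = polyhedron a b := by
  obtain ⟨c, rfl⟩ := hF ⟨q, hqF⟩
  have hc : ∀ v, c v ≤ 0 := by
    intro v
    obtain ⟨ε, hε, h⟩ := exists_pos_forall_lt_add_smul a b Set.univ q v fun j _ => .inl (hq j)
    have hmax := hqF.2 (q + ε • v) fun j => (h j trivial).le
    simp only [map_add, map_smul, smul_eq_mul, add_le_iff_nonpos_right] at hmax
    exact nonpos_of_mul_nonpos_right hmax hε
  have hc0 : ∀ v, c v = 0 := fun v => le_antisymm (hc v) (by simpa using hc (-v))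
  simp [hc0]

theorem exists_subset_polyhedronFace [Finite J] (hF : IsExposed ℝ (polyhedron a b) F)
    (hne : F.Nonempty) (hFP : F ≠ polyhedron a b) : ∃ j, F ⊆ polyhedronFace a b j := by
  by_contra! h
  have hlt : ∀ j, ∃ x ∈ F, a j x < b j := by
    intro j
    obtain ⟨x, hxF, hx⟩ := Set.not_subset.1 (h j)
    exact ⟨x, hxF, (hF.subset hxF j).lt_of_ne fun h => hx ⟨hF.subset hxF, h⟩⟩
  obtain ⟨q, hqF, hq⟩ :=
    exists_mem_forall_lt_of_convex (hF.convex convex_polyhedron) hne hF.subset hlt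
  exact hFP (eq_polyhedron_of_isExposed_of_forall_lt hF hqF hq)

theorem isExposed_polyhedronFace (hne : (polyhedronFace a b j).Nonempty) :
    IsExposed ℝ (polyhedron a b) (polyhedronFace a b j) := by
  obtain ⟨z, hzP, hz⟩ := hne
  refine fun _ => ⟨a j, Set.ext fun x => and_congr_right fun hx =>
    ⟨fun h y hy => (hy j).trans_eq h.symm, fun h => ?_⟩⟩
  exact (hx j).antisymm (hz.symm.trans_le (h z hzP))

theorem vectorSpan_polyhedronFace [Finite J] {z : E} (hz : a j z = b j)
    (hlt : ∀ i ≠ j, a i z < b i) :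
    vectorSpan ℝ (polyhedronFace a b j) = LinearMap.ker (a j : E →ₗ[ℝ] ℝ) := by
  refine (vectorSpan_le_ker_of_forall_eq (a j) fun x hx => hx.2).antisymm fun v hv => ?_
  obtain ⟨ε, hε, h⟩ := exists_pos_forall_lt_add_smul a b {i | i ≠ j} z v fun i hi => .inl (hlt i hi)
  have hzε : a j (z + ε • v) = b j := by
    have hv : a j v = 0 := hv
    simp [hz, hv]
  have hmem := vsub_mem_vectorSpan ℝ (mem_polyhedronFace_of_forall_lt hzε h)
    (mem_polyhedronFace_of_forall_lt hz hlt)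
  rw [vsub_eq_sub, add_sub_cancel_left] at hmem
  exact (Submodule.smul_mem_iff _ hε.ne').1 hmem

namespace IsIrredundant

theorem injective_polyhedronFace (h : IsIrredundant a b) :
    Function.Injective (polyhedronFace a b) := by
  intro i j hij
  by_contra hne
  obtain ⟨z, hz, hlt⟩ := h i
  have hmem : z ∈ polyhedronFace a b j := hij ▸ mem_polyhedronFace_of_forall_lt hz hlt
  exact (hlt j (Ne.symm hne)).ne hmem.2

variable [Finite J]

theorem polyhedronFace_ne_polyhedron (h : IsIrredundant a b) (hj : a j ≠ 0) :
    polyhedronFace a b j ≠ polyhedron a b := by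
  obtain ⟨z, hz, hlt⟩ := h j
  obtain ⟨v, hv⟩ : ∃ v, a j v < 0 := by
    obtain ⟨v, hv⟩ := DFunLike.ne_iff.1 hj
    rcases lt_or_gt_of_ne hv with hv | hv
    exacts [⟨v, hv⟩, ⟨-v, by simpa using hv⟩]
  obtain ⟨ε, -, hε⟩ := exists_pos_forall_lt_add_smul a b Set.univ z v fun i _ =>
    (eq_or_ne i j).elim (fun hi => .inr (hi ▸ ⟨hz.le, hv⟩)) fun hi => .inl (hlt i hi)
  intro heq
  have hmem : z + ε • v ∈ polyhedronFace a b j := heq ▸ fun i => (hε i trivial).le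
  exact (hε j trivial).ne hmem.2

variable [FiniteDimensional ℝ E]

theorem finrank_vectorSpan_polyhedronFace (h : IsIrredundant a b) (hj : a j ≠ 0) :
    Module.finrank ℝ (vectorSpan ℝ (polyhedronFace a b j)) = Module.finrank ℝ E - 1 := by
  obtain ⟨z, hz, hlt⟩ := h j
  have hj : (a j : E →ₗ[ℝ] ℝ) ≠ 0 := fun h => hj (ContinuousLinearMap.coe_injective h)
  rw [vectorSpan_polyhedronFace hz hlt, ← Module.Dual.finrank_ker_add_one_of_ne_zero hj,
    Nat.add_sub_cancel]

theorem isFacet_polyhedronFace (h : IsIrredundant a b) (hj : a j ≠ 0) :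
    IsFacet (polyhedron a b) (polyhedronFace a b j) := by
  obtain ⟨z, hz, hlt⟩ := h j
  exact ⟨isExposed_polyhedronFace ⟨z, mem_polyhedronFace_of_forall_lt hz hlt⟩,
    h.polyhedronFace_ne_polyhedron hj, h.finrank_vectorSpan_polyhedronFace hj⟩

theorem exists_eq_polyhedronFace (h : IsIrredundant a b) (ha : ∀ j, a j ≠ 0)
    (hdim : 2 ≤ Module.finrank ℝ E) (hF : IsFacet (polyhedron a b) F) :
    ∃ j, polyhedronFace a b j = F := by
  obtain ⟨hexp, hFP, hrank⟩ := hF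
  obtain ⟨q, hq⟩ : F.Nonempty := by
    rw [Set.nonempty_iff_ne_empty]
    rintro rfl
    rw [vectorSpan_empty, finrank_bot] at hrank
    omega
  obtain ⟨j, hj⟩ := exists_subset_polyhedronFace hexp ⟨q, hq⟩ hFP
  have hspan : vectorSpan ℝ F = vectorSpan ℝ (polyhedronFace a b j) :=
    Submodule.eq_of_le_of_finrank_eq (vectorSpan_mono ℝ hj)
      (hrank.trans (h.finrank_vectorSpan_polyhedronFace (ha j)).symm)
  refine ⟨j, Set.Subset.antisymm (fun x hx => ?_) hj⟩
  exact mem_of_isExposed_of_sub_mem_vectorSpan hexp hx.1 hq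
    (hspan ▸ vsub_mem_vectorSpan ℝ hx (hj hq))

theorem ncard_setOf_isFacet_polyhedron (h : IsIrredundant a b) (ha : ∀ j, a j ≠ 0)
    (hdim : 2 ≤ Module.finrank ℝ E) : {F | IsFacet (polyhedron a b) F}.ncard = Nat.card J := by
  have hrange : {F | IsFacet (polyhedron a b) F} = Set.range (polyhedronFace a b) :=
    Set.Subset.antisymm (fun _ hF => h.exists_eq_polyhedronFace ha hdim hF) <|
      Set.range_subset_iff.2 fun j => h.isFacet_polyhedronFace (ha j)
  rw [hrange, ← Set.image_univ, Set.ncard_image_of_injective _ h.injective_polyhedronFace,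
    Set.ncard_univ]

end IsIrredundant

end Polyhedron

section Isotonic

variable {ι : Type*}

theorem exists_mem_sub_dotProduct_sub_nonpos [Fintype ι] {K : Set (ι → ℝ)} (hne : K.Nonempty)
    (hclosed : IsClosed K) (hconvex : Convex ℝ K) (c : ι → ℝ) :
    ∃ u ∈ K, ∀ x ∈ K, (c - u) ⬝ᵥ (x - u) ≤ 0 := by
  let K' : Set (EuclideanSpace ℝ ι) := WithLp.ofLp ⁻¹' K
  have hclosed' : IsClosed K' := hclosed.preimage (PiLp.continuous_ofLp 2 _)
  have hconvex' : Convex ℝ K' := hconvex.linear_preimage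
    (EuclideanSpace.equiv ι ℝ : EuclideanSpace ℝ ι →ₗ[ℝ] (ι → ℝ))
  obtain ⟨x₀, hx₀⟩ := hne
  obtain ⟨u, hu, hmin⟩ := exists_norm_eq_iInf_of_complete_convex (K := K')
    ⟨WithLp.toLp 2 x₀, hx₀⟩ hclosed'.isComplete hconvex' (WithLp.toLp 2 c)
  rw [norm_eq_iInf_iff_real_inner_le_zero hconvex' hu] at hmin
  refine ⟨u.ofLp, hu, fun x hx => ?_⟩
  simpa [EuclideanSpace.inner_eq_star_dotProduct, dotProduct_comm] using hmin (WithLp.toLp 2 x) hx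

variable [Preorder ι]

theorem convex_setOf_antitone : Convex ℝ {x : ι → ℝ | Antitone x} := by
  intro x hx y hy r s hr hs _ i j hij
  have hxij := mul_le_mul_of_nonneg_left (hx hij) hr
  have hyij := mul_le_mul_of_nonneg_left (hy hij) hs
  simpa using add_le_add hxij hyij

theorem exists_pos_antitone_add_smul [Finite ι] {u d : ι → ℝ} (hu : Antitone u)
    (hd : ∀ i j, u i = u j → d i = d j) : ∃ ε > (0 : ℝ), Antitone (u + ε • d) := by
  let coord (i : ι) : (ι → ℝ) →ₗ[ℝ] ℝ := LinearMap.proj i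
  obtain ⟨ε, hε, h⟩ := exists_pos_forall_lt_add_smul (fun p : ι × ι => coord p.2 - coord p.1)
    (fun _ => 0) {p | u p.2 < u p.1} u d fun _ hp => .inl (sub_neg.2 hp)
  refine ⟨ε, hε, fun i j hij => ?_⟩
  rcases (hu hij).eq_or_lt with heq | hlt
  · simp [heq, hd j i heq]
  · exact (sub_neg.1 (h (i, j) hlt)).le

/-- Isotonic regression: `u` is the metric projection of `c` onto the cone of antitone vectors. -/
theorem exists_antitone_dotProduct_le [Fintype ι] (c : ι → ℝ) :
    ∃ u : ι → ℝ, Antitone u ∧ (∀ x : ι → ℝ, Antitone x → c ⬝ᵥ x ≤ u ⬝ᵥ x) ∧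
      ∀ d : ι → ℝ, (∀ i j, u i = u j → d i = d j) → c ⬝ᵥ d = u ⬝ᵥ d := by
  obtain ⟨u, hu, hproj⟩ := exists_mem_sub_dotProduct_sub_nonpos (K := {x : ι → ℝ | Antitone x})
    ⟨0, antitone_const⟩ isClosed_antitone convex_setOf_antitone c
  have hadd : ∀ d, Antitone (u + d) → (c - u) ⬝ᵥ d ≤ 0 := fun d hd => by
    simpa using hproj (u + d) hd
  have hlevel : ∀ d, (∀ i j, u i = u j → d i = d j) → (c - u) ⬝ᵥ d ≤ 0 := by
    intro d hd
    obtain ⟨ε, hε, hanti⟩ := exists_pos_antitone_add_smul hu hd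
    have hscaled := hadd _ hanti
    rw [dotProduct_smul, smul_eq_mul] at hscaled
    exact nonpos_of_mul_nonpos_right hscaled hε
  refine ⟨u, hu, fun x hx => ?_, fun d hd => ?_⟩
  · have hux := hadd x (hu.add hx)
    rwa [sub_dotProduct, sub_nonpos] at hux
  · have hpos := hlevel d hd
    have hneg := hlevel (-d) fun i j hij => congrArg Neg.neg (hd i j hij)
    rw [dotProduct_neg] at hneg
    rw [sub_dotProduct] at hpos hneg
    linarith

end Isotonic

section Layers

/-- The sign of `s` if `|s| > t`, and `0` otherwise, for a cut-off `t ≥ 0`. -/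
noncomputable def truncSign (t s : ℝ) : ℝ :=
  (if t < s then 1 else 0) - if t < -s then 1 else 0

theorem truncSign_neg (t s : ℝ) : truncSign t (-s) = -truncSign t s := by
  simp [truncSign]

theorem add_pos_of_truncSign_add_pos {t s s' : ℝ} (ht : 0 ≤ t)
    (h : 0 < truncSign t s + truncSign t s') : 0 < s + s' := by
  unfold truncSign at h
  split_ifs at h <;> linarith

theorem add_neg_of_truncSign_add_neg {t s s' : ℝ} (ht : 0 ≤ t)
    (h : truncSign t s + truncSign t s' < 0) : s + s' < 0 := by
  have hneg := add_pos_of_truncSign_add_pos (s := -s) (s' := -s') ht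
    (by simpa only [truncSign_neg, ← neg_add, Left.neg_pos_iff])
  linarith

open MeasureTheory

theorem integrableOn_ite_lt (s : ℝ) :
    IntegrableOn (fun t => if t < s then (1 : ℝ) else 0) (Set.Ioi 0) := by
  have h : IntegrableOn (1 : ℝ → ℝ) (Set.Iio s ∩ Set.Ioi 0) :=
    integrableOn_const (by simp [Set.inter_comm (Set.Iio s), Set.Ioi_inter_Iio])
  exact (integrable_indicator_iff measurableSet_Iio).2
    (by rwa [IntegrableOn, Measure.restrict_restrict measurableSet_Iio])

theorem setIntegral_Ioi_ite_lt (s : ℝ) :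
    ∫ t in Set.Ioi (0 : ℝ), (if t < s then (1 : ℝ) else 0) = max s 0 := by
  have h : (fun t => if t < s then (1 : ℝ) else 0) = (Set.Iio s).indicator 1 := rfl
  rw [h, integral_indicator_one measurableSet_Iio, measureReal_restrict_apply measurableSet_Iio]
  simp [Set.inter_comm (Set.Iio s), Set.Ioi_inter_Iio]

theorem integrableOn_truncSign (s : ℝ) : IntegrableOn (truncSign · s) (Set.Ioi 0) :=
  (integrableOn_ite_lt s).sub (integrableOn_ite_lt (-s))

theorem setIntegral_truncSign (s : ℝ) : ∫ t in Set.Ioi (0 : ℝ), truncSign t s = s := by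
  simp only [truncSign]
  rw [integral_sub (integrableOn_ite_lt s) (integrableOn_ite_lt (-s)), setIntegral_Ioi_ite_lt,
    setIntegral_Ioi_ite_lt, max_zero_sub_max_neg_zero_eq_self]

theorem dotProduct_eq_setIntegral_truncSign {ι : Type*} [Fintype ι] (u x : ι → ℝ) :
    u ⬝ᵥ x = ∫ t in Set.Ioi (0 : ℝ), (truncSign t ∘ u) ⬝ᵥ x := by
  simp only [dotProduct, Function.comp_apply]
  rw [integral_finsetSum _ fun i _ => (integrableOn_truncSign (u i)).mul_const (x i)]
  simp only [integral_mul_const, setIntegral_truncSign]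

theorem dotProduct_le_dotProduct_of_truncSign {ι : Type*} [Fintype ι] {u x y : ι → ℝ}
    (h : ∀ t > 0, (truncSign t ∘ u) ⬝ᵥ x ≤ (truncSign t ∘ u) ⬝ᵥ y) : u ⬝ᵥ x ≤ u ⬝ᵥ y := by
  have hint : ∀ z : ι → ℝ, IntegrableOn (fun t => (truncSign t ∘ u) ⬝ᵥ z) (Set.Ioi 0) := fun z =>
    integrable_finsetSum _ fun i _ => (integrableOn_truncSign (u i)).mul_const (z i)
  rw [dotProduct_eq_setIntegral_truncSign u x, dotProduct_eq_setIntegral_truncSign u y]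
  exact setIntegral_mono_on (hint x) (hint y) measurableSet_Ioi h

end Layers

section WeightedGraph

open Set

variable {ι : Type*} [Fintype ι] [DecidableEq ι]

/-- The degree sequence of the weighted graph on `ι` in which the edge joining `i ≠ j` has weight
`w i j`; the diagonal of `w` is ignored. -/
def weightedDegree (w : ι → ι → ℝ) (i : ι) : ℝ :=
  ∑ j ∈ {i}ᶜ, w i j

/-- The support function of the set of degree sequences of weighted graphs with weights in `[0, 1]`.
The sum is halved because it runs over ordered pairs. -/
noncomputable def degreeSupport (c : ι → ℝ) : ℝ :=
  (∑ i, ∑ j ∈ {i}ᶜ, max (c i + c j) 0) / 2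

theorem sum_compl_singleton_comm (f : ι → ι → ℝ) :
    ∑ i, ∑ j ∈ {i}ᶜ, f i j = ∑ i, ∑ j ∈ {i}ᶜ, f j i :=
  Finset.sum_comm' (by simp [eq_comm])

variable {w : ι → ι → ℝ}

theorem dotProduct_weightedDegree (hsymm : ∀ i j, w i j = w j i) (c : ι → ℝ) :
    c ⬝ᵥ weightedDegree w = (∑ i, ∑ j ∈ {i}ᶜ, (c i + c j) * w i j) / 2 := by
  have hswap : ∑ i, ∑ j ∈ {i}ᶜ, c j * w i j = ∑ i, ∑ j ∈ {i}ᶜ, c i * w i j := by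
    rw [sum_compl_singleton_comm]
    simp only [hsymm]
  simp only [add_mul, Finset.sum_add_distrib, hswap, dotProduct, weightedDegree, Finset.mul_sum]
  ring

theorem mul_le_max_zero {s u : ℝ} (hu : u ∈ Icc (0 : ℝ) 1) : s * u ≤ max s 0 :=
  (mul_le_mul_of_nonneg_right (le_max_left s 0) hu.1).trans
    (mul_le_of_le_one_right (le_max_right s 0) hu.2)

theorem dotProduct_weightedDegree_le (hsymm : ∀ i j, w i j = w j i)
    (hw : ∀ i j, w i j ∈ Icc (0 : ℝ) 1) (c : ι → ℝ) : c ⬝ᵥ weightedDegree w ≤ degreeSupport c := by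
  rw [dotProduct_weightedDegree hsymm, degreeSupport]
  gcongr
  exact mul_le_max_zero (hw _ _)

theorem dotProduct_weightedDegree_lt (hsymm : ∀ i j, w i j = w j i)
    (hw : ∀ i j, w i j ∈ Icc (0 : ℝ) 1) {c : ι → ℝ} {i j : ι} (hij : i ≠ j)
    (hlt : (c i + c j) * w i j < max (c i + c j) 0) : c ⬝ᵥ weightedDegree w < degreeSupport c := by
  rw [dotProduct_weightedDegree hsymm, degreeSupport]
  gcongr ?_ / 2
  refine Finset.sum_lt_sum (fun i _ => Finset.sum_le_sum fun j _ => mul_le_max_zero (hw i j))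
    ⟨i, Finset.mem_univ i, ?_⟩
  exact Finset.sum_lt_sum (fun j _ => mul_le_max_zero (hw i j)) ⟨j, by simp [hij.symm], hlt⟩

theorem dotProduct_weightedDegree_eq (hsymm : ∀ i j, w i j = w j i) {c : ι → ℝ}
    (h : ∀ i j, i ≠ j → (c i + c j) * w i j = max (c i + c j) 0) :
    c ⬝ᵥ weightedDegree w = degreeSupport c := by
  rw [dotProduct_weightedDegree hsymm, degreeSupport]
  refine congrArg (· / 2) (Finset.sum_congr rfl fun i _ => Finset.sum_congr rfl fun j hj => ?_)
  exact h i j (by simpa [eq_comm] using hj)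

end WeightedGraph

section Threshold

open Set

/-- The Heaviside step function with value `θ` at the jump. -/
noncomputable def unitStep (θ t : ℝ) : ℝ :=
  if 0 < t then 1 else if t < 0 then 0 else θ

theorem unitStep_of_pos {θ t : ℝ} (h : 0 < t) : unitStep θ t = 1 := if_pos h

theorem unitStep_of_neg {θ t : ℝ} (h : t < 0) : unitStep θ t = 0 := by simp [unitStep, h, h.le]

theorem unitStep_zero_right (θ : ℝ) : unitStep θ 0 = θ := by simp [unitStep]

theorem unitStep_mem_Icc {θ : ℝ} (hθ : θ ∈ Icc (0 : ℝ) 1) (t : ℝ) :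
    unitStep θ t ∈ Icc (0 : ℝ) 1 := by
  unfold unitStep
  split_ifs <;> simp [hθ.1, hθ.2]

theorem unitStep_monotone {θ : ℝ} (hθ : θ ∈ Icc (0 : ℝ) 1) : Monotone (unitStep θ) := by
  intro s t hst
  rcases lt_trichotomy s 0 with hs | rfl | hs
  · rw [unitStep_of_neg hs]
    exact (unitStep_mem_Icc hθ t).1
  · rcases hst.eq_or_lt with rfl | ht
    · rfl
    · rw [unitStep_of_pos ht]
      exact (unitStep_mem_Icc hθ 0).2
  · rw [unitStep_of_pos hs, unitStep_of_pos (hs.trans_le hst)]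

theorem unitStep_lt_one {θ t : ℝ} (hθ : θ ∈ Ioo (0 : ℝ) 1) (ht : t ≤ 0) : unitStep θ t < 1 :=
  (unitStep_monotone (Ioo_subset_Icc_self hθ) ht).trans_lt
    (by simpa [unitStep_zero_right] using hθ.2)

theorem unitStep_pos {θ t : ℝ} (hθ : θ ∈ Ioo (0 : ℝ) 1) (ht : 0 ≤ t) : 0 < unitStep θ t :=
  lt_of_lt_of_le (by simpa [unitStep_zero_right] using hθ.1)
    (unitStep_monotone (Ioo_subset_Icc_self hθ) ht)

theorem unitStep_lt_unitStep {θ s t : ℝ} (hθ : θ ∈ Ioo (0 : ℝ) 1) (hs : s ≤ 0) (ht : 0 ≤ t)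
    (hst : s < t) : unitStep θ s < unitStep θ t := by
  rcases hs.eq_or_lt with rfl | hs
  · rw [unitStep_of_pos hst]
    exact unitStep_lt_one hθ le_rfl
  · rw [unitStep_of_neg hs]
    exact unitStep_pos hθ ht

theorem mul_unitStep_eq_max {θ s t : ℝ} (hpos : 0 < s → 0 < t) (hneg : s < 0 → t < 0) :
    s * unitStep θ t = max s 0 := by
  rcases lt_trichotomy s 0 with hs | rfl | hs
  · rw [unitStep_of_neg (hneg hs), mul_zero, max_eq_right hs.le]
  · simp
  · rw [unitStep_of_pos (hpos hs), mul_one, max_eq_left hs.le]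

theorem mul_unitStep_lt_max {θ s t : ℝ} (hθ : θ ∈ Ioo (0 : ℝ) 1)
    (h : 0 < s ∧ t ≤ 0 ∨ s < 0 ∧ 0 ≤ t) : s * unitStep θ t < max s 0 := by
  rcases h with ⟨hs, ht⟩ | ⟨hs, ht⟩
  · exact (mul_lt_of_lt_one_right hs (unitStep_lt_one hθ ht)).trans_le (le_max_left s 0)
  · exact (mul_neg_of_neg_of_pos hs (unitStep_pos hθ ht)).trans_le (le_max_right s 0)

variable {ι : Type*} [Fintype ι] [DecidableEq ι]

/-- The degree sequence of the threshold graph with vertex weights `c`: `i` and `j` are joined if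
`c i + c j > 0`, and by an edge of weight `θ` if `c i + c j = 0`. -/
noncomputable def thresholdDegree (θ : ℝ) (c : ι → ℝ) : ι → ℝ :=
  weightedDegree fun i j => unitStep θ (c i + c j)

variable {θ : ℝ} {c c' : ι → ℝ} {i j m : ι}

theorem dotProduct_thresholdDegree_lt (hθ : θ ∈ Ioo (0 : ℝ) 1) (hij : i ≠ j)
    (h : 0 < c' i + c' j ∧ c i + c j ≤ 0 ∨ c' i + c' j < 0 ∧ 0 ≤ c i + c j) :
    c' ⬝ᵥ thresholdDegree θ c < degreeSupport c' :=
  dotProduct_weightedDegree_lt (fun i j => by rw [add_comm])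
    (fun _ _ => unitStep_mem_Icc (Ioo_subset_Icc_self hθ) _) hij (mul_unitStep_lt_max hθ h)

theorem dotProduct_thresholdDegree_eq (hpos : ∀ i j, 0 < c' i + c' j → 0 < c i + c j)
    (hneg : ∀ i j, c' i + c' j < 0 → c i + c j < 0) :
    c' ⬝ᵥ thresholdDegree θ c = degreeSupport c' :=
  dotProduct_weightedDegree_eq (fun i j => by rw [add_comm])
    fun i j _ => mul_unitStep_eq_max (hpos i j) (hneg i j)

theorem thresholdDegree_eq_add_sum (hij : i ≠ j) :
    thresholdDegree θ c i = unitStep θ (c i + c j) + ∑ m ∈ {i, j}ᶜ, unitStep θ (c i + c m) := by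
  have hset : ({i}ᶜ : Finset ι) = insert j {i, j}ᶜ := by
    ext m
    simp only [Finset.mem_compl, Finset.mem_insert, Finset.mem_singleton]
    grind
  rw [thresholdDegree, weightedDegree, hset, Finset.sum_insert (by simp)]

theorem thresholdDegree_le_thresholdDegree (hθ : θ ∈ Icc (0 : ℝ) 1) (h : c j ≤ c i) :
    thresholdDegree θ c j ≤ thresholdDegree θ c i := by
  rcases eq_or_ne i j with rfl | hij
  · rfl
  rw [thresholdDegree_eq_add_sum hij, thresholdDegree_eq_add_sum hij.symm, add_comm (c j),
    Finset.pair_comm]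
  gcongr
  exact unitStep_monotone hθ (by gcongr)

theorem thresholdDegree_lt_thresholdDegree (hθ : θ ∈ Ioo (0 : ℝ) 1) (h : c j < c i) (hmi : m ≠ i)
    (hmj : m ≠ j) (hj : c j + c m ≤ 0) (hi : 0 ≤ c i + c m) :
    thresholdDegree θ c j < thresholdDegree θ c i := by
  have hij : i ≠ j := fun hij => h.ne' (congrArg c hij)
  rw [thresholdDegree_eq_add_sum hij, thresholdDegree_eq_add_sum hij.symm, add_comm (c j),
    Finset.pair_comm]
  gcongr ?_ + ?_
  refine Finset.sum_lt_sum (fun m _ => unitStep_monotone (Ioo_subset_Icc_self hθ) (by gcongr))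
    ⟨m, by simp [hmi, hmj], unitStep_lt_unitStep hθ hj hi (by gcongr)⟩

theorem thresholdDegree_congr (hθ : θ ∈ Icc (0 : ℝ) 1) (h : c i = c j) :
    thresholdDegree θ c i = thresholdDegree θ c j :=
  (thresholdDegree_le_thresholdDegree hθ h.le).antisymm (thresholdDegree_le_thresholdDegree hθ h.ge)

theorem thresholdDegree_antitone [Preorder ι] (hθ : θ ∈ Icc (0 : ℝ) 1) (hc : Antitone c) :
    Antitone (thresholdDegree θ c) := fun _ _ hij => thresholdDegree_le_thresholdDegree hθ (hc hij)

end Threshold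

section Koren

open Set

/-- The coefficient vector of the Koren inequality indexed by `(k, l)`: the indicator of the first
`k` coordinates minus that of the last `l`. -/
def headTail (n k l : ℕ) (i : Fin n) : ℝ :=
  (if (i : ℕ) < k then 1 else 0) - if n ≤ (i : ℕ) + l then 1 else 0

/-- The right-hand side of the Koren inequality indexed by `(k, l)`. -/
def korenBound (n k l : ℕ) : ℝ :=
  k * (n - 1 - l)

/-- The polyhedron of weakly decreasing vectors satisfying all Koren inequalities. -/
def korenPolyhedron (n : ℕ) : Set (Fin n → ℝ) :=
  {x | Antitone x ∧ ∀ k l, k + l ≤ n → headTail n k l ⬝ᵥ x ≤ korenBound n k l}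

variable {n k l : ℕ}

theorem headTail_antitone (n k l : ℕ) : Antitone (headTail n k l) := by
  intro i j hij
  have : (i : ℕ) ≤ j := hij
  simp only [headTail]
  split_ifs <;> first | omega | norm_num

theorem sum_ite_val_lt (hk : k ≤ n) : ∑ i : Fin n, (if (i : ℕ) < k then (1 : ℝ) else 0) = k := by
  rw [Finset.sum_boole, Fin.card_filter_val_lt, min_eq_right hk]

theorem sum_ite_not_le_val_add (hl : l ≤ n) :
    ∑ i : Fin n, (if n ≤ (i : ℕ) + l then (0 : ℝ) else 1) = n - l := by
  rw [← Nat.cast_sub hl, ← sum_ite_val_lt (Nat.sub_le n l)]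
  refine Finset.sum_congr rfl fun i _ => ?_
  split_ifs <;> first | rfl | omega

theorem degreeSupport_headTail (hkl : k + l ≤ n) :
    degreeSupport (headTail n k l) = korenBound n k l := by
  let p (i : Fin n) : ℝ := if (i : ℕ) < k then 1 else 0
  let q (i : Fin n) : ℝ := if n ≤ (i : ℕ) + l then 0 else 1
  have hpq : ∀ i, p i * q i = p i := fun i => by
    simp only [p, q]
    split_ifs <;> first | omega | norm_num
  have hmax : ∀ i j, max (headTail n k l i + headTail n k l j) 0 = p i * q j + p j * q i :=
    fun i j => by
      simp only [headTail, p, q]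
      split_ifs <;> first | omega | norm_num
  have hrow : ∀ i, ∑ j ∈ {i}ᶜ, p i * q j = p i * (n - 1 - l) := fun i => by
    have hq : q i + ∑ j ∈ {i}ᶜ, q j = n - l :=
      (Fintype.sum_eq_add_sum_compl i q).symm.trans (sum_ite_not_le_val_add (by omega))
    rw [← Finset.mul_sum, ← sub_eq_of_eq_add' hq.symm]
    linear_combination -hpq i
  have hsum : ∑ i, ∑ j ∈ {i}ᶜ, max (headTail n k l i + headTail n k l j) 0 =
      2 * ∑ i, ∑ j ∈ {i}ᶜ, p i * q j := by
    rw [two_mul]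
    nth_rw 2 [sum_compl_singleton_comm fun i j => p i * q j]
    simp only [← Finset.sum_add_distrib]
    exact Finset.sum_congr rfl fun i _ => Finset.sum_congr rfl fun j _ => hmax i j
  rw [degreeSupport, hsum, mul_div_cancel_left₀ _ two_ne_zero]
  simp only [hrow, ← Finset.sum_mul, p, sum_ite_val_lt (show k ≤ n by omega), korenBound]

theorem exists_mem_iff_val_lt {s : Set (Fin n)} (hs : IsLowerSet s) :
    ∃ k ≤ n, ∀ i, i ∈ s ↔ (i : ℕ) < k := by
  rcases hs.eq_univ_or_Iio with rfl | ⟨a, rfl⟩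
  exacts [⟨n, le_rfl, fun i => by simp⟩, ⟨a, a.2.le, fun i => Fin.lt_def⟩]

theorem exists_truncSign_comp_eq_headTail {u : Fin n → ℝ} (hu : Antitone u) {t : ℝ} (ht : 0 ≤ t) :
    ∃ k l, k + l ≤ n ∧ truncSign t ∘ u = headTail n k l := by
  obtain ⟨k, hkn, hk⟩ := exists_mem_iff_val_lt (s := {i | t < u i})
    fun i j hji hi => lt_of_lt_of_le hi (hu hji)
  obtain ⟨m, hmn, hm⟩ := exists_mem_iff_val_lt (s := {i | -t ≤ u i})
    fun i j hji hi => le_trans hi (hu hji)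
  simp only [mem_ofPred_eq] at hk hm
  have hkm : k ≤ m := by
    by_contra! h
    have ht₁ := (hk ⟨m, by omega⟩).2 h
    have ht₂ := not_le.1 (mt (hm ⟨m, by omega⟩).1 (lt_irrefl m))
    linarith
  refine ⟨k, n - m, by omega, funext fun i => ?_⟩
  have htail : t < -u i ↔ n ≤ (i : ℕ) + (n - m) := by
    rw [lt_neg, ← not_le, hm]
    omega
  simp only [Function.comp_apply, truncSign, headTail, hk, htail]

theorem dotProduct_le_dotProduct_thresholdDegree {u x : Fin n → ℝ} (hu : Antitone u)
    (hx : x ∈ korenPolyhedron n) : u ⬝ᵥ x ≤ u ⬝ᵥ thresholdDegree 0 u := by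
  refine dotProduct_le_dotProduct_of_truncSign fun t ht => ?_
  have heq : (truncSign t ∘ u) ⬝ᵥ thresholdDegree 0 u = degreeSupport (truncSign t ∘ u) :=
    dotProduct_thresholdDegree_eq (fun _ _ => add_pos_of_truncSign_add_pos ht.le)
      fun _ _ => add_neg_of_truncSign_add_neg ht.le
  obtain ⟨k, l, hkl, hlayer⟩ := exists_truncSign_comp_eq_headTail hu ht.le
  rw [heq, hlayer, degreeSupport_headTail hkl]
  exact hx.2 k l hkl

theorem convex_korenPolyhedron (n : ℕ) : Convex ℝ (korenPolyhedron n) :=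
  fun _ hx _ hy _ _ ha hb hab => ⟨convex_setOf_antitone hx.1 hy.1 ha hb hab, fun k l hkl =>
    convex_halfSpace_le (dotProductEquiv ℝ (Fin n) (headTail n k l)).isLinear _
      (hx.2 k l hkl) (hy.2 k l hkl) ha hb hab⟩

theorem degC_eq_weightedDegree (G : SimpleGraph (Fin n)) [DecidableRel G.Adj]
    (σ : Equiv.Perm (Fin n)) (i : Fin n) :
    (degC G (σ i) : ℝ) = weightedDegree (fun i j => if G.Adj (σ i) (σ j) then 1 else 0) i := by
  have hdeg : (degC G (σ i) : ℝ) = ∑ j, if G.Adj (σ i) j then 1 else 0 := by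
    rw [Finset.sum_boole, degC]
    congr!
  rw [hdeg, ← Equiv.sum_comp σ, Fintype.sum_eq_add_sum_compl i, if_neg G.irrefl, zero_add,
    weightedDegree]

theorem DP_subset_korenPolyhedron (n : ℕ) : DP n ⊆ korenPolyhedron n := by
  classical
  refine convexHull_min ?_ (convex_korenPolyhedron n)
  rintro x ⟨hx, G, σ, hG⟩
  refine ⟨hx, fun k l hkl => ?_⟩
  rw [funext fun i => (hG i).trans (degC_eq_weightedDegree G σ i), ← degreeSupport_headTail hkl]
  refine dotProduct_weightedDegree_le (fun i j => by simp only [G.adj_comm]) (fun i j => ?_) _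
  split_ifs <;> simp

theorem isClosed_DP (n : ℕ) : IsClosed (DP n) := by
  refine (Set.Finite.isCompact_convexHull ℝ ?_).isClosed
  refine (Set.finite_range fun p : SimpleGraph (Fin n) × Equiv.Perm (Fin n) =>
    fun i => (degC p.1 (p.2 i) : ℝ)).subset ?_
  rintro x ⟨-, G, σ, h⟩
  exact ⟨(G, σ), (funext h).symm⟩

theorem thresholdDegree_zero_mem_DP {u : Fin n → ℝ} (hu : Antitone u) :
    thresholdDegree 0 u ∈ DP n := by
  classical
  let G : SimpleGraph (Fin n) := SimpleGraph.fromRel fun i j => 0 < u i + u j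
  refine subset_convexHull ℝ _ ⟨thresholdDegree_antitone (by simp) hu, G, 1, fun i => ?_⟩
  rw [degC_eq_weightedDegree, thresholdDegree, weightedDegree, weightedDegree]
  refine Finset.sum_congr rfl fun j hj => ?_
  have hij : i ≠ j := by simpa [eq_comm] using hj
  simp [G, unitStep, hij, add_comm (u j)]

theorem DP_eq_korenPolyhedron (n : ℕ) : DP n = korenPolyhedron n := by
  refine (DP_subset_korenPolyhedron n).antisymm fun x hx => ?_
  by_contra hxD
  obtain ⟨f, r, hfr, hr⟩ :=
    geometric_hahn_banach_closed_point (convex_convexHull ℝ _) (isClosed_DP n) hxD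
  obtain ⟨c, hc⟩ := (dotProductEquiv ℝ (Fin n)).surjective (f : (Fin n → ℝ) →ₗ[ℝ] ℝ)
  have hf : ∀ y, f y = c ⬝ᵥ y := fun y => (LinearMap.congr_fun hc y).symm
  obtain ⟨u, hu, hdom, hlevel⟩ := exists_antitone_dotProduct_le c
  have hfx : f x ≤ f (thresholdDegree 0 u) := by
    calc
      f x ≤ u ⬝ᵥ x := (hf x).trans_le (hdom x hx.1)
      _ ≤ u ⬝ᵥ thresholdDegree 0 u := dotProduct_le_dotProduct_thresholdDegree hu hx
      _ = f (thresholdDegree 0 u) := by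
        rw [hf, hlevel _ fun i j => thresholdDegree_congr (by simp)]
  exact (hfr _ (thresholdDegree_zero_mem_DP hu)).not_ge (hr.le.trans hfx)

end Koren

section FacetPairs

open Finset hiding antidiagonal mem_antidiagonal
open Finset.HasAntidiagonal

/-- The pairs `(k, l)` whose Koren inequality defines a facet of `DP n`, for `n ≥ 4`. -/
def facetPairs (n : ℕ) : Finset (ℕ × ℕ) :=
  {p ∈ range (n + 1) ×ˢ range (n + 1) |
    p = (1, 0) ∨ p = (0, 1) ∨ 1 ≤ p.1 ∧ 1 ≤ p.2 ∧ (p.1 + p.2 = n ∨ p.1 + p.2 + 3 ≤ n)}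

variable {n k l : ℕ}

theorem mem_facetPairs (hn : 1 ≤ n) :
    (k, l) ∈ facetPairs n ↔
      k = 1 ∧ l = 0 ∨ k = 0 ∧ l = 1 ∨ 1 ≤ k ∧ 1 ≤ l ∧ (k + l = n ∨ k + l + 3 ≤ n) := by
  simp only [facetPairs, mem_filter, mem_product, mem_range, Prod.mk.injEq]
  omega

theorem card_biUnion_range_antidiagonal (m : ℕ) :
    #((range m).biUnion antidiagonal) = m * (m + 1) / 2 := by
  rw [card_biUnion fun s _ t _ hst => disjoint_left.2 fun p hs ht =>
    hst ((mem_antidiagonal.1 hs).symm.trans (mem_antidiagonal.1 ht))]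
  simp only [Nat.card_antidiagonal]
  have hsum := (sum_range_succ' id m).symm.trans (sum_range_id (m + 1))
  simpa [mul_comm] using hsum

theorem facetPairs_eq_union (hn : 4 ≤ n) :
    facetPairs n = {(1, 0), (0, 1)} ∪ (antidiagonal (n - 2) ∪
      (range (n - 4)).biUnion antidiagonal).image (Prod.map (· + 1) (· + 1)) := by
  ext ⟨k, l⟩
  rw [mem_facetPairs (by omega)]
  simp only [mem_union, mem_insert, mem_singleton, Prod.mk.injEq, mem_image, mem_biUnion,
    mem_range, mem_antidiagonal, Prod.exists, Prod.map_apply, or_assoc]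
  refine or_congr_right (or_congr_right ⟨fun h => ⟨k - 1, l - 1, ?_, by omega, by omega⟩, ?_⟩)
  · rcases h with ⟨hk, hl, h | h⟩
    exacts [.inl (by omega), .inr ⟨_, by omega, rfl⟩]
  · rintro ⟨a, b, h | ⟨m, hm, h⟩, rfl, rfl⟩ <;> omega

theorem card_facetPairs (hn : 4 ≤ n) :
    #(facetPairs n) = n + 1 + (n - 4) * (n - 3) / 2 := by
  have hinj : Function.Injective (Prod.map (· + 1) (· + 1) : ℕ × ℕ → ℕ × ℕ) :=
    (add_left_injective 1).prodMap (add_left_injective 1)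
  have hpair : #{((1 : ℕ), (0 : ℕ)), (0, 1)} = 2 := rfl
  rw [facetPairs_eq_union hn, card_union_of_disjoint, card_image_of_injective _ hinj,
    card_union_of_disjoint, card_biUnion_range_antidiagonal, Nat.card_antidiagonal, hpair,
    show n - 4 + 1 = n - 3 by omega]
  · omega
  · simp only [disjoint_left, mem_biUnion, mem_range, mem_antidiagonal, not_exists, not_and]
    intro p hp m hm
    omega
  · simp [disjoint_left]

end FacetPairs

section Redundancy

variable {n k l : ℕ} {x : Fin n → ℝ}

theorem headTail_comp_rev (n k l : ℕ) : headTail n l k ∘ Fin.rev = -headTail n k l := by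
  funext i
  simp only [Function.comp_apply, Pi.neg_apply, headTail, Fin.val_rev]
  split_ifs <;> first | omega | norm_num

theorem headTail_zero_right (i : Fin n) : headTail n k 0 i = if (i : ℕ) < k then 1 else 0 := by
  simp [headTail, i.2]

theorem headTail_zero_right_dotProduct_le (hx : Antitone x) (hk : k ≤ n) :
    headTail n k 0 ⬝ᵥ x ≤ k * (headTail n 1 0 ⬝ᵥ x) := by
  rcases n with _ | n
  · simp [dotProduct]
  have hone : headTail (n + 1) 1 0 = Pi.single 0 1 := by
    funext i
    simp only [headTail_zero_right, Pi.single_apply, Fin.ext_iff, Nat.lt_one_iff, Fin.val_zero]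
  rw [hone, single_one_dotProduct, ← sum_ite_val_lt hk, Finset.sum_mul]
  simp only [dotProduct, headTail_zero_right]
  refine Finset.sum_le_sum fun i _ => mul_le_mul_of_nonneg_left (hx (Fin.zero_le i)) ?_
  split_ifs <;> simp

theorem headTail_zero_left_dotProduct_le (hx : Antitone x) (hl : l ≤ n) :
    headTail n 0 l ⬝ᵥ x ≤ l * (headTail n 0 1 ⬝ᵥ x) := by
  have hrev : ∀ l, headTail n 0 l ⬝ᵥ x = headTail n l 0 ⬝ᵥ -(x ∘ Fin.rev) := fun l => by
    rw [dotProduct_neg, ← neg_dotProduct, ← neg_neg (headTail n 0 l), ← headTail_comp_rev,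
      neg_dotProduct, neg_dotProduct]
    exact congrArg Neg.neg (dotProduct_comp_equiv_symm _ x Fin.revPerm).symm
  rw [hrev, hrev]
  exact headTail_zero_right_dotProduct_le
    (fun i j hij => neg_le_neg (hx (Fin.rev_le_rev.2 hij))) hl

theorem headTail_add_headTail (h : k + l + 1 = n) :
    headTail n (k + 1) l + headTail n k (l + 1) = (2 : ℝ) • headTail n k l := by
  funext i
  simp only [Pi.add_apply, Pi.smul_apply, smul_eq_mul, headTail]
  split_ifs <;> first | omega | norm_num

theorem headTail_succ_succ (h : k + l + 2 = n) :
    headTail n (k + 1) (l + 1) =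
      headTail n k l + (Pi.single ⟨k, by omega⟩ 1 - Pi.single ⟨k + 1, by omega⟩ 1) := by
  funext i
  simp only [Pi.add_apply, Pi.sub_apply, Pi.single_apply, Fin.ext_iff, headTail]
  split_ifs <;> first | omega | norm_num

theorem headTail_dotProduct_le_of_add_one_eq (h : k + l + 1 = n)
    (hhead : headTail n (k + 1) l ⬝ᵥ x ≤ korenBound n (k + 1) l)
    (htail : headTail n k (l + 1) ⬝ᵥ x ≤ korenBound n k (l + 1)) :
    headTail n k l ⬝ᵥ x ≤ korenBound n k l := by
  have hsum := congrArg (· ⬝ᵥ x) (headTail_add_headTail h)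
  simp only [add_dotProduct, smul_dotProduct, smul_eq_mul] at hsum
  have hbound : korenBound n (k + 1) l + korenBound n k (l + 1) = 2 * korenBound n k l := by
    subst h
    simp only [korenBound]
    push_cast
    ring
  linarith

theorem headTail_dotProduct_le_of_add_two_eq (hx : Antitone x) (h : k + l + 2 = n)
    (hle : headTail n (k + 1) (l + 1) ⬝ᵥ x ≤ korenBound n (k + 1) (l + 1)) :
    headTail n k l ⬝ᵥ x ≤ korenBound n k l := by
  have hsum := congrArg (· ⬝ᵥ x) (headTail_succ_succ h)
  simp only [add_dotProduct, sub_dotProduct, single_one_dotProduct] at hsum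
  have hbound : korenBound n (k + 1) (l + 1) = korenBound n k l := by
    subst h
    simp only [korenBound]
    push_cast
    ring
  have hanti : x ⟨k + 1, by omega⟩ ≤ x ⟨k, by omega⟩ := hx (Fin.mk_le_mk.2 k.le_succ)
  linarith

theorem mem_korenPolyhedron_iff (hn : 1 ≤ n) :
    x ∈ korenPolyhedron n ↔
      Antitone x ∧ ∀ p ∈ facetPairs n, headTail n p.1 p.2 ⬝ᵥ x ≤ korenBound n p.1 p.2 := by
  have hmem {k l} := mem_facetPairs (n := n) (k := k) (l := l) hn
  refine and_congr_right fun hx => ⟨fun h p hp => h _ _ ?_, fun h k l hkl => ?_⟩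
  · have hp := hmem.1 hp
    omega
  rcases Nat.eq_zero_or_pos l with rfl | hl
  · refine (headTail_zero_right_dotProduct_le hx hkl).trans ?_
    have h₁ := h (1, 0) (hmem.2 (by omega))
    simp only [korenBound, Nat.cast_one, one_mul] at h₁ ⊢
    exact mul_le_mul_of_nonneg_left h₁ k.cast_nonneg
  rcases Nat.eq_zero_or_pos k with rfl | hk
  · refine (headTail_zero_left_dotProduct_le hx (by omega)).trans ?_
    have h₁ := h (0, 1) (hmem.2 (by omega))
    simp only [korenBound, Nat.cast_zero, zero_mul] at h₁ ⊢
    exact mul_nonpos_of_nonneg_of_nonpos l.cast_nonneg h₁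
  by_cases h₁ : k + l + 1 = n
  · exact headTail_dotProduct_le_of_add_one_eq h₁ (h (k + 1, l) (hmem.2 (by omega)))
      (h (k, l + 1) (hmem.2 (by omega)))
  by_cases h₂ : k + l + 2 = n
  · exact headTail_dotProduct_le_of_add_two_eq hx h₂ (h (k + 1, l + 1) (hmem.2 (by omega)))
  exact h (k, l) (hmem.2 (by omega))

end Redundancy

section Irredundancy

open Set

variable {n k l k' l' : ℕ}

theorem exists_headTail_add_pos (hkl : k + l ≤ n) (hl : l < n) (hkl' : k' + l' ≤ n)
    (h : k < k' ∧ k' + l' < n ∨ k + 2 ≤ k' ∨ k < k' ∧ k + l = n ∨ 1 ≤ k' ∧ l' < l) :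
    ∃ i j, i ≠ j ∧ 0 < headTail n k' l' i + headTail n k' l' j ∧
      headTail n k l i + headTail n k l j ≤ 0 := by
  simp only [Fin.exists_iff, ne_eq, Fin.mk.injEq, headTail]
  rcases h with h | h | h | h
  · refine ⟨k' - 1, by omega, k', by omega, by omega, ?_, ?_⟩ <;>
      split_ifs <;> first | omega | norm_num
  · refine ⟨k' - 1, by omega, k' - 2, by omega, by omega, ?_, ?_⟩ <;>
      split_ifs <;> first | omega | norm_num
  · refine ⟨k' - 1, by omega, k' - 2, by omega, by omega, ?_, ?_⟩ <;>
      split_ifs <;> first | omega | norm_num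
  · refine ⟨0, by omega, n - l, by omega, by omega, ?_, ?_⟩ <;>
      split_ifs <;> first | omega | norm_num

theorem exists_headTail_add_neg (hkl : k + l ≤ n) (hk : k < n) (hkl' : k' + l' ≤ n)
    (h : l < l' ∧ k' + l' < n ∨ l + 2 ≤ l' ∨ l < l' ∧ k + l = n ∨ 1 ≤ l' ∧ k' < k) :
    ∃ i j, i ≠ j ∧ headTail n k' l' i + headTail n k' l' j < 0 ∧
      0 ≤ headTail n k l i + headTail n k l j := by
  obtain ⟨i, j, hij, hpos, hnonpos⟩ := exists_headTail_add_pos (n := n) (k := l) (l := k)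
    (k' := l') (l' := k') (by omega) hk (by omega) (by omega)
  have hrev : ∀ k l i, headTail n k l (Fin.rev i) = -headTail n l k i :=
    fun k l => congrFun (headTail_comp_rev n l k)
  refine ⟨i.rev, j.rev, Fin.rev_injective.ne hij, ?_, ?_⟩ <;> rw [hrev, hrev] <;> linarith

theorem headTail_dotProduct_thresholdDegree_lt (hn : 4 ≤ n) {θ : ℝ} (hθ : θ ∈ Ioo (0 : ℝ) 1)
    (h : (k, l) ∈ insert (0, 0) (facetPairs n)) (h' : (k', l') ∈ facetPairs n)
    (hne : (k', l') ≠ (k, l)) :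
    headTail n k' l' ⬝ᵥ thresholdDegree θ (headTail n k l) < korenBound n k' l' := by
  rw [Finset.mem_insert, mem_facetPairs (by omega), Prod.mk.injEq] at h
  rw [mem_facetPairs (by omega)] at h'
  rw [ne_eq, Prod.mk.injEq] at hne
  rw [← degreeSupport_headTail (by omega)]
  by_cases hpos : k < k' ∧ k' + l' < n ∨ k + 2 ≤ k' ∨ k < k' ∧ k + l = n ∨ 1 ≤ k' ∧ l' < l
  · obtain ⟨i, j, hij, hij'⟩ :=
      exists_headTail_add_pos (by omega) (by omega) (by omega) hpos
    exact dotProduct_thresholdDegree_lt hθ hij (.inl hij')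
  · obtain ⟨i, j, hij, hij'⟩ := exists_headTail_add_neg (n := n) (k := k) (l := l) (k' := k')
      (l' := l') (by omega) (by omega) (by omega) (by omega)
    exact dotProduct_thresholdDegree_lt hθ hij (.inr hij')

theorem headTail_dotProduct_thresholdDegree_self (hkl : k + l ≤ n) (θ : ℝ) :
    headTail n k l ⬝ᵥ thresholdDegree θ (headTail n k l) = korenBound n k l := by
  rw [dotProduct_thresholdDegree_eq (fun _ _ => id) fun _ _ => id, degreeSupport_headTail hkl]

theorem thresholdDegree_headTail_succ_lt (hn : 3 ≤ n) {θ : ℝ} (hθ : θ ∈ Ioo (0 : ℝ) 1)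
    (h : (k, l) ∈ insert (0, 0) (facetPairs n)) {i j : Fin n} (hij : (j : ℕ) = i + 1)
    (hne : headTail n k l j ≠ headTail n k l i) :
    thresholdDegree θ (headTail n k l) j < thresholdDegree θ (headTail n k l) i := by
  rw [Finset.mem_insert, mem_facetPairs (by omega), Prod.mk.injEq] at h
  have hlt : headTail n k l j < headTail n k l i :=
    (headTail_antitone n k l (Fin.le_def.2 (by omega))).lt_of_ne hne
  have hjump : (i : ℕ) + 1 = k ∨ (i : ℕ) + 1 + l = n := by
    by_contra hjump
    apply hne
    simp only [headTail]
    split_ifs <;> first | omega | norm_num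
  obtain ⟨m, hmi, hmj, hj, hi⟩ : ∃ m : Fin n, (m : ℕ) ≠ i ∧ (m : ℕ) ≠ j ∧
      headTail n k l j + headTail n k l m ≤ 0 ∧ 0 ≤ headTail n k l i + headTail n k l m := by
    by_cases hi : (i : ℕ) < k ∧ (j : ℕ) + 1 < n
    · refine ⟨⟨j + 1, hi.2⟩, by simp only; omega, by simp only; omega, ?_⟩
      constructor <;> simp only [headTail] <;> split_ifs <;> first | omega | norm_num
    · refine ⟨⟨i - 1, by omega⟩, by simp only; omega, by simp only; omega, ?_⟩
      constructor <;> simp only [headTail] <;> split_ifs <;> first | omega | norm_num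
  exact thresholdDegree_lt_thresholdDegree hθ hlt (fun h => hmi (congrArg Fin.val h))
    (fun h => hmj (congrArg Fin.val h)) hj hi

end Irredundancy

section FacetSystem

open Set

/-- The index set of the facets of `DP n`: the monotonicity inequalities `x i ≥ x (i + 1)`, followed
by the Koren inequalities indexed by `facetPairs n`. -/
abbrev FacetIndex (n : ℕ) : Type :=
  Fin (n - 1) ⊕ facetPairs n

/-- The outer normals of the facets of `DP n`. -/
def facetNormal (n : ℕ) : FacetIndex n → Fin n → ℝ
  | .inl i => Pi.single ⟨i + 1, by omega⟩ 1 - Pi.single ⟨i, by omega⟩ 1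
  | .inr p => headTail n p.1.1 p.1.2

/-- The linear functional `x ↦ facetNormal n j ⬝ᵥ x`. -/
noncomputable def facetFunctional (n : ℕ) (j : FacetIndex n) : StrongDual ℝ (Fin n → ℝ) :=
  (dotProductEquiv ℝ (Fin n) (facetNormal n j)).toContinuousLinearMap

/-- The right-hand sides of the facet inequalities of `DP n`. -/
def facetBound (n : ℕ) : FacetIndex n → ℝ
  | .inl _ => 0
  | .inr p => korenBound n p.1.1 p.1.2

variable {n k l : ℕ}

theorem facetFunctional_inl (i : Fin (n - 1)) (x : Fin n → ℝ) :
    facetFunctional n (.inl i) x = x ⟨i + 1, by omega⟩ - x ⟨i, by omega⟩ := by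
  change (Pi.single _ 1 - Pi.single _ 1) ⬝ᵥ x = _
  simp only [sub_dotProduct, single_one_dotProduct]

theorem facetFunctional_inr (p : facetPairs n) (x : Fin n → ℝ) :
    facetFunctional n (.inr p) x = headTail n p.1.1 p.1.2 ⬝ᵥ x := rfl

theorem headTail_ne_zero (hkl : k + l ≤ n) (hpos : 0 < k + l) : headTail n k l ≠ 0 := by
  intro h
  have hfirst := congrFun h ⟨0, by omega⟩
  have hlast := congrFun h ⟨n - 1, by omega⟩
  simp only [headTail, Pi.zero_apply] at hfirst hlast
  split_ifs at hfirst hlast <;> first | omega | linarith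

theorem add_le_of_mem_facetPairs (h : (k, l) ∈ facetPairs n) : k + l ≤ n := by
  simp only [facetPairs, Finset.mem_filter, Finset.mem_product, Finset.mem_range,
    Prod.mk.injEq] at h
  omega

theorem headTail_ne_zero_of_mem_facetPairs (h : (k, l) ∈ facetPairs n) :
    headTail n k l ≠ 0 := by
  refine headTail_ne_zero (add_le_of_mem_facetPairs h) (Nat.pos_of_ne_zero fun h₀ => ?_)
  obtain ⟨rfl, rfl⟩ := Nat.add_eq_zero_iff.1 h₀
  simp [facetPairs] at h

theorem facetNormal_ne_zero : ∀ j, facetNormal n j ≠ 0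
  | .inl i => fun h => by
    simpa [facetNormal, Fin.ext_iff, Pi.single_apply] using congrFun h ⟨i, by omega⟩
  | .inr p => headTail_ne_zero_of_mem_facetPairs p.2

theorem facetFunctional_ne_zero (j : FacetIndex n) : facetFunctional n j ≠ 0 :=
  LinearMap.toContinuousLinearMap.map_ne_zero_iff.2 <|
    (dotProductEquiv ℝ (Fin n)).map_ne_zero_iff.2 (facetNormal_ne_zero j)

theorem antitone_iff_facetFunctional_le {x : Fin n → ℝ} :
    Antitone x ↔ ∀ i, facetFunctional n (.inl i) x ≤ 0 := by
  simp only [facetFunctional_inl, sub_nonpos]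
  rcases n with _ | n
  · exact ⟨fun _ i => i.elim0, fun _ i => i.elim0⟩
  · exact Fin.antitone_iff_succ_le

theorem DP_eq_polyhedron (hn : 1 ≤ n) :
    DP n = polyhedron (facetFunctional n) (facetBound n) := by
  rw [DP_eq_korenPolyhedron]
  ext x
  rw [mem_korenPolyhedron_iff hn, antitone_iff_facetFunctional_le]
  exact ⟨fun h => Sum.rec h.1 fun p => h.2 p.1 p.2, fun h => ⟨fun i => h (.inl i),
    fun p hp => h (.inr ⟨p, hp⟩)⟩⟩

theorem exists_pos_forall_facetFunctional_lt (hn : 4 ≤ n) {θ : ℝ} (hθ : θ ∈ Ioo (0 : ℝ) 1)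
    (hkl : (k, l) ∈ insert (0, 0) (facetPairs n)) (v : Fin n → ℝ) (s : Set (FacetIndex n))
    (hinl : ∀ i : Fin (n - 1), .inl i ∈ s →
      headTail n k l ⟨i + 1, by omega⟩ = headTail n k l ⟨i, by omega⟩ →
        v ⟨i + 1, by omega⟩ < v ⟨i, by omega⟩)
    (hinr : ∀ p : facetPairs n, .inr p ∈ s → p.1 ≠ (k, l)) :
    ∃ ε > (0 : ℝ), ∀ j ∈ s,
      facetFunctional n j (thresholdDegree θ (headTail n k l) + ε • v) < facetBound n j := by
  refine exists_pos_forall_lt_add_smul _ _ s _ v ?_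
  rintro (i | p) hs
  · simp only [facetFunctional_inl, facetBound, sub_neg, sub_nonpos]
    by_cases htie : headTail n k l ⟨i + 1, by omega⟩ = headTail n k l ⟨i, by omega⟩
    · exact .inr ⟨(thresholdDegree_congr (Ioo_subset_Icc_self hθ) htie).le, hinl i hs htie⟩
    · exact .inl (thresholdDegree_headTail_succ_lt (by omega) hθ hkl rfl htie)
  · exact .inl (headTail_dotProduct_thresholdDegree_lt hn hθ hkl p.2 (hinr p hs))

theorem exists_only_inl_tight (hn : 4 ≤ n) (i : Fin (n - 1)) :
    ∃ z, facetFunctional n (.inl i) z = facetBound n (.inl i) ∧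
      ∀ j ≠ .inl i, facetFunctional n j z < facetBound n j := by
  -- `v` drops at every index except `i`, where the constant degrees of the threshold graph of
  -- `headTail n 0 0 = 0` keep the inequality tight.
  let v (j : Fin n) : ℝ := if (j : ℕ) ≤ i then -(j : ℝ) else 1 - j
  have hθ : (1 / 2 : ℝ) ∈ Ioo 0 1 := by norm_num
  have hconst : ∀ a b, headTail n 0 0 a = headTail n 0 0 b := by
    simp [headTail_zero_right]
  have hdrop : ∀ j : Fin (n - 1), (.inl j : FacetIndex n) ≠ .inl i →
      v ⟨j + 1, by omega⟩ < v ⟨j, by omega⟩ := by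
    intro j hji
    have hji : (j : ℕ) ≠ i := fun h => hji (congrArg _ (Fin.ext h))
    simp only [v]
    push_cast
    split_ifs <;> first | omega | linarith
  have hzero : (0, 0) ∉ facetPairs n := by
    simp [mem_facetPairs (show 1 ≤ n by omega)]
  obtain ⟨ε, -, h⟩ := exists_pos_forall_facetFunctional_lt hn hθ
    (Finset.mem_insert_self (0, 0) _) v {j | j ≠ .inl i} (fun j hj _ => hdrop j hj)
    fun p _ hp => hzero (hp ▸ p.2)
  refine ⟨_, ?_, h⟩
  have hp := thresholdDegree_congr (Ioo_subset_Icc_self hθ)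
    (hconst ⟨i + 1, by omega⟩ ⟨i, by omega⟩)
  rw [map_add, map_smul, facetFunctional_inl, facetFunctional_inl, hp, sub_self]
  simp [v, facetBound]

theorem exists_only_inr_tight (hn : 4 ≤ n) (p : facetPairs n) :
    ∃ z, facetFunctional n (.inr p) z = facetBound n (.inr p) ∧
      ∀ j ≠ .inr p, facetFunctional n j z < facetBound n j := by
  have hkl : p.1.1 + p.1.2 ≤ n := add_le_of_mem_facetPairs p.2
  let ψ := headTail n p.1.1 p.1.2
  let index (i : Fin n) : ℝ := (i : ℕ)
  -- Subtracting `index` breaks the ties of `ψ`; the multiple of `ψ` does not affect them and makes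
  -- `v` orthogonal to `ψ`.
  let v : Fin n → ℝ := (ψ ⬝ᵥ index / ψ ⬝ᵥ ψ) • ψ - index
  have hv : ψ ⬝ᵥ v = 0 := by
    have hψ : ψ ⬝ᵥ ψ ≠ 0 :=
      dotProduct_self_eq_zero.not.2 (headTail_ne_zero_of_mem_facetPairs p.2)
    rw [dotProduct_sub, dotProduct_smul, smul_eq_mul, div_mul_cancel₀ _ hψ, sub_self]
  have hdrop : ∀ i : Fin (n - 1), ψ ⟨i + 1, by omega⟩ = ψ ⟨i, by omega⟩ →
      v ⟨i + 1, by omega⟩ < v ⟨i, by omega⟩ := by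
    intro i htie
    simp [v, index, htie]
  obtain ⟨ε, -, h⟩ := exists_pos_forall_facetFunctional_lt (θ := 1 / 2) hn (by norm_num)
    (Finset.mem_insert_of_mem p.2) v {j | j ≠ .inr p} (fun i _ => hdrop i)
    fun q hq hqp => hq (congrArg _ (Subtype.ext hqp))
  refine ⟨_, ?_, h⟩
  rw [map_add, map_smul, facetFunctional_inr, facetFunctional_inr, hv,
    headTail_dotProduct_thresholdDegree_self hkl, smul_zero, add_zero, facetBound]

theorem isIrredundant_facetFunctional (hn : 4 ≤ n) :
    IsIrredundant (facetFunctional n) (facetBound n)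
  | .inl i => exists_only_inl_tight hn i
  | .inr p => exists_only_inr_tight hn p

theorem natCard_facetIndex (hn : 4 ≤ n) : Nat.card (FacetIndex n) = n * (n - 3) / 2 + 6 := by
  rw [Nat.card_sum, Nat.card_fin, Nat.card_eq_finsetCard, card_facetPairs hn]
  obtain ⟨m, rfl⟩ : ∃ m, n = m + 4 := ⟨n - 4, by omega⟩
  have hprod : (m + 4) * (m + 1) = m * (m + 1) + 2 * (2 * (m + 1)) := by ring
  simp only [Nat.add_sub_cancel, show m + 4 - 3 = m + 1 by omega, hprod]
  omega

end FacetSystem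

/-- for `n ≥ 4`, the polytope `DP(n)` has exactly `n(n-3)/2 + 6`
facets, where a facet is an exposed proper face of affine dimension `n - 1`. -/
theorem card_facets_DP (n : ℕ) (hn : 4 ≤ n) :
    {F : Set (Fin n → ℝ) | IsExposed ℝ (DP n) F ∧ F ≠ DP n ∧
      Module.finrank ℝ (vectorSpan ℝ F) = n - 1}.ncard = n * (n - 3) / 2 + 6 := by
  have hdim : 2 ≤ Module.finrank ℝ (Fin n → ℝ) := by
    rw [Module.finrank_fin_fun]
    omega
  have hcard := (isIrredundant_facetFunctional hn).ncard_setOf_isFacet_polyhedron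
    facetFunctional_ne_zero hdim
  rw [← DP_eq_polyhedron (by omega), natCard_facetIndex hn] at hcard
  simpa only [IsFacet, Module.finrank_fin_fun] using hcard
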